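/- Let Z = (z_1, …, z_n) be a configuration of n entities of radius ρ ≥ 0 in ℝ^d, let 1 ≤ x ≤ n−1 be an integer, let i ≠ j be indices, and set s := ‖z_i − z_j‖ − 2ρ. If s ≥ σ_i(x) and ρ ≤ ((1−λ)/λ)·s for some real 0 < λ ≤ 1, then σ_i(x) + σ_j(x) ≤ ((λ+2)/λ)·s; equivalently, (λ/(λ+2))·(σ_i(x) + σ_j(x)) ≤ s. -/

import Mathlib

open Metric Set

/-- The `x`-separation of entity `i` in the configuration `z` of entities of radius `ρ`:
the `x`-th smallest value of `dist (z i) (z j) - 2ρ` over `j ≠ i`. -/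
noncomputable def xSep {d n : ℕ} (ρ : ℝ) (z : Fin n → EuclideanSpace ℝ (Fin d))
    (x : ℕ) (i : Fin n) : ℝ :=
  sInf {r : ℝ | x ≤ {j : Fin n | j ≠ i ∧ dist (z i) (z j) - 2 * ρ ≤ r}.ncard}

/-!
Exchanging `i` and `j` and leaving every other index fixed sends the entities other than `i`
to those other than `j`, and by the triangle inequality it increases the distance to the
respective base point by at most `‖z_i - z_j‖`. Hence `σ_j(x) ≤ σ_i(x) + ‖z_i - z_j‖`, so that
`σ_i(x) + σ_j(x) ≤ 2 σ_i(x) + s + 2ρ ≤ 3s + 2ρ`, and the bound on `ρ` turns the right-hand side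
into `((λ + 2) / λ) s`.
-/

/-- The `x`-th smallest value, counted with multiplicity and starting from `x = 1`, of `f` on
the set `s`, encoded as the least threshold `r` such that `f k ≤ r` for at least `x` indices
`k ∈ s`. It is meant for finite `s` and `1 ≤ x ≤ s.ncard`; elsewhere `sInf` and `ncard` give
junk values. -/
noncomputable def nthSmallestOn {ι : Type*} (s : Set ι) (f : ι → ℝ) (x : ℕ) : ℝ :=
  sInf {r : ℝ | x ≤ {k | k ∈ s ∧ f k ≤ r}.ncard}

/-- The `x`-separation of the ball of radius `ρ` centred at `z i` from the other balls of radius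
`ρ` centred at points of the family `z`, in an arbitrary pseudometric space; `xSep` is the case
of a finite sequence in Euclidean space. -/
noncomputable def separation {ι X : Type*} [PseudoMetricSpace X] (ρ : ℝ) (z : ι → X) (x : ℕ)
    (i : ι) : ℝ :=
  nthSmallestOn {i}ᶜ (fun k => dist (z i) (z k) - 2 * ρ) x

namespace nthSmallestOn

variable {ι κ : Type*} {s : Set ι} {t : Set κ} {f : ι → ℝ} {g : κ → ℝ} {x : ℕ}

theorem thresholds_nonempty (hs : s.Finite) (hx : x ≤ s.ncard) :
    {r : ℝ | x ≤ {k | k ∈ s ∧ f k ≤ r}.ncard}.Nonempty := by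
  obtain ⟨r, hr⟩ := (hs.image f).bddAbove
  have sublevel_eq : {k | k ∈ s ∧ f k ≤ r} = s :=
    sep_eq_self_iff_mem_true.2 fun _ hk => hr (mem_image_of_mem f hk)
  exact ⟨r, hx.trans (congrArg ncard sublevel_eq).ge⟩

theorem thresholds_bddBelow (hf : BddBelow (f '' s)) (hx : 1 ≤ x) :
    BddBelow {r : ℝ | x ≤ {k | k ∈ s ∧ f k ≤ r}.ncard} := by
  obtain ⟨b, hb⟩ := hf
  refine ⟨b, fun r hr => ?_⟩
  obtain ⟨k, hks, hkr⟩ := nonempty_of_ncard_ne_zero (Nat.ne_zero_of_lt (hx.trans hr))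
  exact (hb (mem_image_of_mem f hks)).trans hkr

theorem le_add_of_injOn {e : ι → κ} {c : ℝ} (ht : t.Finite) (hmaps : MapsTo e s t)
    (hinj : InjOn e s) (hle : ∀ k ∈ s, g (e k) ≤ f k + c) (hx : 1 ≤ x)
    (hxs : x ≤ s.ncard) : nthSmallestOn t g x ≤ nthSmallestOn s f x + c := by
  have hs : s.Finite := Finite.of_injOn hmaps hinj ht
  rw [← sub_le_iff_le_add]
  refine le_csInf (thresholds_nonempty hs hxs) fun r hr => ?_
  rw [sub_le_iff_le_add]
  refine csInf_le (thresholds_bddBelow (ht.image g).bddBelow hx) ?_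
  refine le_trans hr (ncard_le_ncard_of_injOn e ?_ (hinj.mono (sep_subset s _))
    (ht.sep _))
  rintro k ⟨hks, hkr⟩
  exact ⟨hmaps hks, (hle k hks).trans (by gcongr)⟩

end nthSmallestOn

theorem dist_swap_le {ι X : Type*} [DecidableEq ι] [PseudoMetricSpace X] (z : ι → X) {i k : ι}
    (j : ι) (hk : k ≠ i) :
    dist (z j) (z (Equiv.swap i j k)) ≤ dist (z i) (z k) + dist (z i) (z j) := by
  rcases eq_or_ne k j with rfl | hkj
  · rw [Equiv.swap_apply_right, dist_comm]
    exact le_add_of_nonneg_left dist_nonneg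
  · rw [Equiv.swap_apply_of_ne_of_ne hk hkj, add_comm]
    exact dist_triangle_left _ _ _

theorem xSep_eq_separation {d n : ℕ} (ρ : ℝ) (z : Fin n → EuclideanSpace ℝ (Fin d)) (x : ℕ)
    (i : Fin n) : xSep ρ z x i = separation ρ z x i :=
  rfl

section Separation

variable {ι X : Type*} [Finite ι] [PseudoMetricSpace X] {x : ℕ}

theorem separation_le_separation_add_dist (ρ : ℝ) (z : ι → X) (hx : 1 ≤ x)
    (hxι : x < Nat.card ι) (i j : ι) :
    separation ρ z x j ≤ separation ρ z x i + dist (z i) (z j) := by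
  classical
  have hcard : x ≤ ({i}ᶜ : Set ι).ncard := by
    rw [ncard_compl, ncard_singleton]
    exact Nat.le_sub_one_of_lt hxι
  have hmaps : MapsTo (Equiv.swap i j) {i}ᶜ {j}ᶜ := fun k hk hkj =>
    hk ((Equiv.swap i j).injective (hkj.trans (Equiv.swap_apply_left i j).symm))
  refine nthSmallestOn.le_add_of_injOn (toFinite _) hmaps
    (Equiv.swap i j).injective.injOn (fun k hk => ?_) hx hcard
  linarith [dist_swap_le z j hk]

theorem stmt6_general {ρ lam : ℝ} (z : ι → X) (hx : 1 ≤ x) (hxι : x < Nat.card ι) (i j : ι)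
    (hlam : lam ≠ 0) (hs : separation ρ z x i ≤ dist (z i) (z j) - 2 * ρ)
    (hρs : ρ ≤ ((1 - lam) / lam) * (dist (z i) (z j) - 2 * ρ)) :
    separation ρ z x i + separation ρ z x j ≤
      ((lam + 2) / lam) * (dist (z i) (z j) - 2 * ρ) := by
  have hsep := separation_le_separation_add_dist ρ z hx hxι i j
  set s := dist (z i) (z j) - 2 * ρ with hs_def
  calc separation ρ z x i + separation ρ z x j
      ≤ 3 * s + 2 * ρ := by linarith only [hs, hsep, hs_def]
    _ ≤ 3 * s + 2 * ((1 - lam) / lam * s) := by gcongr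
    _ = (lam + 2) / lam * s := by field_simp; ring

end Separation

theorem stmt6 (d n : ℕ) (ρ : ℝ) (hρ : 0 ≤ ρ)
    (z : Fin n → EuclideanSpace ℝ (Fin d))
    (x : ℕ) (hx1 : 1 ≤ x) (hxn : x ≤ n - 1)
    (i j : Fin n) (hij : i ≠ j)
    (lam : ℝ) (hlam0 : 0 < lam) (hlam1 : lam ≤ 1)
    (hs : xSep ρ z x i ≤ dist (z i) (z j) - 2 * ρ)
    (hρs : ρ ≤ ((1 - lam) / lam) * (dist (z i) (z j) - 2 * ρ)) :
    xSep ρ z x i + xSep ρ z x j ≤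
      ((lam + 2) / lam) * (dist (z i) (z j) - 2 * ρ) := by
  have hcard : x < Nat.card (Fin n) := by rw [Nat.card_fin]; have := i.pos; omega
  simp only [xSep_eq_separation] at hs ⊢
  exact stmt6_general z hx1 hcard i j hlam0.ne' hs hρs
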